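/- Let (Ω, 𝒜, ℙ) be a probability space and let P be a probability measure on ℝ such that x ↦ e^{tx} is P-integrable for every t ∈ ℝ; write L(t) = ∫ e^{tx} dP(x). For each n ∈ ℕ let Q_n be a random probability measure on ℝ, i.e. a map Q_n : Ω → (probability measures on ℝ) such that ω ↦ ∫ g dQ_n(ω) is measurable for every bounded measurable g : ℝ → ℝ. Assume that for every t ∈ ℝ, x ↦ e^{tx} is Q_n(ω)-integrable for every ω, that ω ↦ ∫ e^{tx} dQ_n(ω)(x) is measurable, and that ∫ e^{tx} dQ_n(ω)(x) converges in probability to L(t) as n → ∞. Then the Lévy–Prokhorov distance between Q_n(ω) and P converges in probability to 0, i.e. for every ε > 0, ℙ(ω : d_LP(Q_n(ω), P) > ε) → 0 as n → ∞, where d_LP denotes the Lévy–Prokhorov metric on probability measures on ℝ (which metrizes weak convergence). -/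

import Mathlib

/-!
Convergence in probability to a constant is convergence along a filter on `ι × Ω`, so the theorem
reduces to Curtiss' theorem for a deterministic family of measures along an arbitrary filter: if
the moment generating functions converge near `0` to that of `P`, the measures converge weakly to
`P`. Convergence at `t` and `-t` for one `t ≠ 0` bounds the integrals of
`exp (t * x) + exp (-t * x)`, which gives tightness, so by Prokhorov's theorem it is enough that
every weak cluster point `ν` equals `P`. A bound on the moment generating functions at `2 * t`
bounds the second moments of `exp (t * x)`, whence uniform integrability, and the moment generating
function of `ν` at `t` is the limit, that of `P`. Near `0` it determines `ν`: by analytic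
continuation in a vertical strip it fixes the characteristic function.
-/

open MeasureTheory Filter

section InMeasureFilter

open scoped Topology

variable {Ω ι E : Type*} [MeasurableSpace Ω] {μ : Measure Ω} {l : Filter ι}

/-- The filter on `ι × Ω` of the sets whose slices have complements of measure tending to `0`.
A function converges along it to a constant exactly when it converges in measure, so that facts
about limits along an arbitrary filter apply verbatim to convergence in measure. -/
def inMeasureFilter (μ : Measure Ω) (l : Filter ι) : Filter (ι × Ω) :=
  comk (fun s => Tendsto (fun i => μ (Prod.mk i ⁻¹' s)) l (𝓝 0)) (by simp [tendsto_const_nhds])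
    (fun _ ht _ hst => tendsto_of_tendsto_of_tendsto_of_le_of_le tendsto_const_nhds ht
      (fun _ => zero_le) fun _ => measure_mono (Set.preimage_mono hst))
    (fun s hs t ht => tendsto_of_tendsto_of_tendsto_of_le_of_le tendsto_const_nhds
      (add_zero (0 : ENNReal) ▸ hs.add ht) (fun _ => zero_le) fun _ => measure_union_le _ _)

lemma tendsto_inMeasureFilter_nhds_iff [PseudoEMetricSpace E] {f : ι → Ω → E} {c : E} :
    Tendsto (Function.uncurry f) (inMeasureFilter μ l) (𝓝 c) ↔
      TendstoInMeasure μ f l fun _ => c := by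
  simp only [EMetric.tendsto_nhds, TendstoInMeasure, inMeasureFilter, Filter.Eventually, mem_comk,
    Set.compl_ofPred, Set.preimage_ofPred_eq, Function.uncurry_apply_pair, not_lt, gt_iff_lt]

lemma tendstoInMeasure_iff_lt_dist [PseudoMetricSpace E] {f : ι → Ω → E} {g : Ω → E} :
    TendstoInMeasure μ f l g ↔
      ∀ ε > 0, Tendsto (fun i => μ {ω | ε < dist (f i ω) (g ω)}) l (𝓝 0) := by
  rw [tendstoInMeasure_iff_dist]
  refine ⟨fun h ε hε => ?_, fun h ε hε => ?_⟩
  · exact tendsto_of_tendsto_of_tendsto_of_le_of_le tendsto_const_nhds (h ε hε)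
      (fun _ => zero_le) fun _ => measure_mono fun _ => le_of_lt (α := ℝ)
  · exact tendsto_of_tendsto_of_tendsto_of_le_of_le tendsto_const_nhds (h (ε / 2) (half_pos hε))
      (fun _ => zero_le) fun _ => measure_mono fun _ => (half_lt_self hε).trans_le

end InMeasureFilter

section Clamp

open scoped Topology NNReal ENNReal BoundedContinuousFunction

variable {X ι : Type*} [TopologicalSpace X] {f : C(X, ℝ)} {K : ℝ≥0} {x : X}

/-- The truncation of a continuous function `f` to the interval `[-K, K]`, as a bounded continuous
function, against which weak convergence can be tested. -/
noncomputable def clamp (f : C(X, ℝ)) (K : ℝ≥0) : X →ᵇ ℝ :=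
  .ofNormedAddCommGroup (fun x => max (-K) (min (f x) K)) (by fun_prop) K fun x =>
    abs_le.2 ⟨le_max_left _ _, max_le (neg_le_self K.2) (min_le_right _ _)⟩

lemma clamp_apply : clamp f K x = max (-K : ℝ) (min (f x) K) := rfl

lemma clamp_of_abs_le (h : |f x| ≤ K) : clamp f K x = f x := by
  rw [clamp_apply, min_eq_left (le_of_abs_le h), max_eq_right (neg_le_of_abs_le h)]

lemma abs_clamp_le : |clamp f K x| ≤ |f x| := by
  rw [clamp_apply]
  have := K.coe_nonneg
  grind

lemma mul_abs_sub_clamp_le_sq : K * |f x - clamp f K x| ≤ f x ^ 2 := by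
  rcases le_total |f x| K with h | h
  · simpa [clamp_of_abs_le h] using sq_nonneg (f x)
  · have hdist : |f x - clamp f K x| ≤ |f x| := by
      rw [clamp_apply]
      have := K.coe_nonneg
      grind
    calc K * |f x - clamp f K x| ≤ |f x| * |f x| := by gcongr
      _ = f x ^ 2 := by rw [abs_mul_abs_self, sq]

lemma tendsto_clamp : Tendsto (fun K => clamp f K x) atTop (𝓝 (f x)) :=
  tendsto_const_nhds.congr' <| by
    filter_upwards [eventually_ge_atTop ‖f x‖₊] with K hK using (clamp_of_abs_le hK).symm

variable [MeasurableSpace X] [OpensMeasurableSpace X]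

lemma tendsto_integral_clamp {ν : Measure X} (hf : Integrable f ν) :
    Tendsto (fun K => ∫ x, clamp f K x ∂ν) atTop (𝓝 (∫ x, f x ∂ν)) :=
  tendsto_integral_filter_of_dominated_convergence (fun x => |f x|)
    (.of_forall fun K => (clamp f K).continuous.aestronglyMeasurable)
    (.of_forall fun _ => .of_forall fun _ => abs_clamp_le) hf.abs
    (.of_forall fun _ => tendsto_clamp)

variable {l : Filter ι} {C : ℝ}

lemma abs_integral_sub_integral_clamp_le {ν : Measure X} [IsFiniteMeasure ν]
    (hf : MemLp f 2 ν) (hK : 0 < K) :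
    |∫ x, f x ∂ν - ∫ x, clamp f K x ∂ν| ≤ (∫ x, f x ^ 2 ∂ν) / K := by
  have hint := hf.integrable one_le_two
  rw [← integral_sub hint ((clamp f K).integrable ν), ← integral_div]
  refine abs_integral_le_integral_abs.trans <|
    integral_mono (hint.sub ((clamp f K).integrable ν)).abs (hf.integrable_sq.div_const _)
      fun x => ?_
  rw [le_div_iff₀' (by exact_mod_cast hK)]
  exact mul_abs_sub_clamp_le_sq

lemma tendstoUniformlyOnFilter_integral_clamp {μ : ι → Measure X}
    [∀ i, IsFiniteMeasure (μ i)]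
    (hf : ∀ᶠ i in l, MemLp f 2 (μ i) ∧ ∫ x, f x ^ 2 ∂μ i ≤ C) :
    TendstoUniformlyOnFilter (fun K i => ∫ x, clamp f K x ∂μ i) (fun i => ∫ x, f x ∂μ i)
      atTop l := by
  rw [Metric.tendstoUniformlyOnFilter_iff]
  intro ε hε
  have hlarge : ∀ᶠ K : ℝ≥0 in atTop, C / K < ε :=
    (NNReal.tendsto_coe_atTop.2 tendsto_id).const_div_atTop C |>.eventually_lt_const hε
  filter_upwards [((eventually_gt_atTop 0).and hlarge).prod_mk hf]
  rintro ⟨K, i⟩ ⟨⟨hK, hCK⟩, hfi, hle⟩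
  calc dist (∫ x, f x ∂μ i) (∫ x, clamp f K x ∂μ i) ≤ (∫ x, f x ^ 2 ∂μ i) / K :=
        abs_integral_sub_integral_clamp_le hfi hK
    _ ≤ C / K := by gcongr
    _ < ε := hCK

variable [l.NeBot] {μ : ι → ProbabilityMeasure X} {ν : ProbabilityMeasure X}

lemma integrable_of_tendsto_of_integral_le (hν : Tendsto μ l (𝓝 ν)) (hf₀ : 0 ≤ f)
    (hf : ∀ᶠ i in l, Integrable f (μ i : Measure X) ∧ ∫ x, f x ∂(μ i : Measure X) ≤ C) :
    Integrable f (ν : Measure X) := by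
  have hclamp (K : ℝ≥0) : ∫ x, ‖clamp f K x‖ ∂(ν : Measure X) ≤ C := by
    have hnonneg (x : X) : 0 ≤ clamp f K x := le_max_of_le_right (le_min (hf₀ x) K.2)
    simp only [Real.norm_of_nonneg (hnonneg _)]
    refine le_of_tendsto (ProbabilityMeasure.tendsto_iff_forall_integral_tendsto.1 hν _)
      (hf.mono fun i hi => (integral_mono ((clamp f K).integrable _) hi.1 fun x => ?_).trans hi.2)
    exact (le_abs_self _).trans (abs_clamp_le.trans_eq (abs_of_nonneg (hf₀ x)))
  have hle (K : ℝ≥0) : ∫⁻ x, ‖clamp f K x‖ₑ ∂(ν : Measure X) ≤ ENNReal.ofReal C := by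
    rw [← ofReal_integral_norm_eq_lintegral_enorm ((clamp f K).integrable _)]
    exact ENNReal.ofReal_le_ofReal (hclamp K)
  refine ⟨f.continuous.aestronglyMeasurable, ?_⟩
  calc ∫⁻ x, ‖f x‖ₑ ∂(ν : Measure X)
      = ∫⁻ x, liminf (fun K => ‖clamp f K x‖ₑ) atTop ∂(ν : Measure X) := by
        simp only [tendsto_clamp.enorm.liminf_eq]
    _ ≤ liminf (fun K => ∫⁻ x, ‖clamp f K x‖ₑ ∂(ν : Measure X)) atTop :=
        lintegral_liminf_le' fun K => (clamp f K).continuous.enorm.aemeasurable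
    _ ≤ ENNReal.ofReal C := liminf_le_of_le ⟨0, by simp⟩ fun b hb => by
        obtain ⟨K, hK⟩ := hb.exists
        exact hK.trans (hle K)
    _ < ∞ := ENNReal.ofReal_lt_top

theorem memLp_two_and_tendsto_integral_of_integral_sq_le (hν : Tendsto μ l (𝓝 ν))
    (hf : ∀ᶠ i in l, MemLp f 2 (μ i : Measure X) ∧ ∫ x, f x ^ 2 ∂(μ i : Measure X) ≤ C) :
    MemLp f 2 (ν : Measure X) ∧
      Tendsto (fun i => ∫ x, f x ∂(μ i : Measure X)) l (𝓝 (∫ x, f x ∂(ν : Measure X))) := by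
  have hsq : Integrable (f ^ 2 : C(X, ℝ)) (ν : Measure X) :=
    integrable_of_tendsto_of_integral_le hν (fun x => sq_nonneg (f x))
      (hf.mono fun _ h => ⟨h.1.integrable_sq, h.2⟩)
  have hν2 : MemLp f 2 (ν : Measure X) :=
    (memLp_two_iff_integrable_sq f.continuous.aestronglyMeasurable).2 hsq
  exact ⟨hν2, (tendstoUniformlyOnFilter_integral_clamp hf).tendsto_of_eventually_tendsto
    (.of_forall fun K => ProbabilityMeasure.tendsto_iff_forall_integral_tendsto.1 hν (clamp f K))
    (tendsto_integral_clamp (hν2.integrable one_le_two))⟩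

end Clamp

section Tightness

open ProbabilityTheory (mgf integrableExpSet)
open scoped Topology ENNReal

lemma isTightMeasureSet_of_lintegral_le {X : Type*} [TopologicalSpace X] [MeasurableSpace X]
    {S : Set (Measure X)} {V : X → ℝ≥0∞} {C : ℝ≥0∞} (hV : Measurable V)
    (hV' : Tendsto V (cocompact X) (𝓝 ∞)) (hC : C ≠ ∞) (hS : ∀ μ ∈ S, ∫⁻ x, V x ∂μ ≤ C) :
    IsTightMeasureSet S := by
  rw [isTightMeasureSet_iff_exists_isCompact_measure_compl_le]
  intro ε hε
  obtain ⟨n, hn⟩ := ENNReal.exists_nat_mul_gt hε.ne' hC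
  have hn₀ : (n : ℝ≥0∞) ≠ 0 := left_ne_zero_of_mul (pos_of_gt hn).ne'
  obtain ⟨K, hK, hKV⟩ := mem_cocompact.1 (hV'.eventually_const_lt (ENNReal.natCast_lt_top n))
  refine ⟨K, hK, fun μ hμ => ?_⟩
  calc μ Kᶜ ≤ μ {x | n ≤ V x} := measure_mono (hKV.trans fun x => le_of_lt (α := ℝ≥0∞))
    _ ≤ (∫⁻ x, V x ∂μ) / n :=
        meas_ge_le_lintegral_div hV.aemeasurable hn₀ (ENNReal.natCast_ne_top n)
    _ ≤ C / n := by gcongr; exact hS μ hμ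
    _ ≤ ε := ENNReal.div_le_of_le_mul' hn.le

lemma tendsto_exp_mul_add_exp_neg_mul_cocompact {t : ℝ} (ht : t ≠ 0) :
    Tendsto (fun x => Real.exp (t * x) + Real.exp (-t * x)) (cocompact ℝ) atTop := by
  have habs : Tendsto (fun x => Real.exp |t * x|) (cocompact ℝ) atTop :=
    Real.tendsto_exp_atTop.comp <| tendsto_norm_cocompact_atTop.comp
      (Homeomorph.mulLeft₀ t ht).isClosedEmbedding.tendsto_cocompact
  refine tendsto_atTop_mono (fun x => ?_) habs
  simpa only [neg_mul] using Real.exp_abs_le (t * x)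

lemma isTightMeasureSet_of_mgf_add_mgf_neg_le {S : Set (Measure ℝ)} {t C : ℝ} (ht : t ≠ 0)
    (hS : ∀ μ ∈ S, t ∈ integrableExpSet id μ ∧ -t ∈ integrableExpSet id μ ∧
      mgf id μ t + mgf id μ (-t) ≤ C) :
    IsTightMeasureSet S := by
  refine isTightMeasureSet_of_lintegral_le
    (V := fun x => ENNReal.ofReal (Real.exp (t * x) + Real.exp (-t * x))) (by fun_prop)
    (ENNReal.tendsto_ofReal_nhds_top.2 (tendsto_exp_mul_add_exp_neg_mul_cocompact ht))
    (ENNReal.ofReal_ne_top (r := C)) fun μ hμ => ?_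
  obtain ⟨hpos, hneg, hle⟩ := hS μ hμ
  calc ∫⁻ x, ENNReal.ofReal (Real.exp (t * x) + Real.exp (-t * x)) ∂μ
      = ENNReal.ofReal (∫ x, Real.exp (t * x) + Real.exp (-t * x) ∂μ) :=
        (ofReal_integral_eq_lintegral_ofReal (hpos.add hneg)
          (.of_forall fun x => by dsimp; positivity)).symm
    _ = ENNReal.ofReal (mgf id μ t + mgf id μ (-t)) := congrArg _ (integral_add hpos hneg)
    _ ≤ ENNReal.ofReal C := ENNReal.ofReal_le_ofReal hle

end Tightness

section MGF

open Complex (I)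
open ProbabilityTheory (mgf complexMGF integrableExpSet convex_integrableExpSet
  analyticOnNhd_complexMGF complexMGF_ofReal complexMGF_id_mul_I)
open scoped Topology

lemma eqOn_complexMGF_of_mgf_eventuallyEq {Ω Ω' : Type*} [MeasurableSpace Ω] [MeasurableSpace Ω']
    {X : Ω → ℝ} {Y : Ω' → ℝ} {μ : Measure Ω} {ν : Measure Ω'} {t : ℝ}
    (hX : integrableExpSet X μ ∈ 𝓝 t) (hY : integrableExpSet Y ν ∈ 𝓝 t)
    (h : mgf X μ =ᶠ[𝓝 t] mgf Y ν) :
    Set.EqOn (complexMGF X μ) (complexMGF Y ν)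
      {z | z.re ∈ interior (integrableExpSet X μ) ∩ interior (integrableExpSet Y ν)} := by
  refine AnalyticOnNhd.eqOn_of_preconnected_of_frequently_eq (𝕜 := ℂ) (z₀ := t)
    (analyticOnNhd_complexMGF.mono fun z hz => hz.1)
    (analyticOnNhd_complexMGF.mono fun z hz => hz.2)
    ((convex_integrableExpSet.interior.inter convex_integrableExpSet.interior).linear_preimage
      Complex.reLm).isPreconnected
    ⟨mem_interior_iff_mem_nhds.2 hX, mem_interior_iff_mem_nhds.2 hY⟩ ?_
  have hreal : ∃ᶠ s : ℝ in 𝓝[≠] t, complexMGF X μ s = complexMGF Y ν s := by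
    refine (h.filter_mono nhdsWithin_le_nhds).frequently.mono fun s hs => ?_
    rw [complexMGF_ofReal, complexMGF_ofReal, hs]
  have hcoe : Tendsto Complex.ofReal (𝓝[≠] t) (𝓝[≠] (t : ℂ)) :=
    Complex.continuous_ofReal.continuousWithinAt.tendsto_nhdsWithin fun s hs => by simpa using hs
  exact hcoe.frequently hreal

theorem measure_eq_of_mgf_eventuallyEq {μ ν : Measure ℝ} [IsFiniteMeasure μ] [IsFiniteMeasure ν]
    (hμ : integrableExpSet id μ ∈ 𝓝 0) (hν : integrableExpSet id ν ∈ 𝓝 0)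
    (h : mgf id μ =ᶠ[𝓝 0] mgf id ν) : μ = ν := by
  refine Measure.ext_of_charFun (funext fun t => ?_)
  rw [← complexMGF_id_mul_I, ← complexMGF_id_mul_I]
  refine eqOn_complexMGF_of_mgf_eventuallyEq hμ hν h ?_
  have hre : ((t : ℂ) * I).re = 0 := by simp
  simpa only [Set.mem_ofPred_eq, hre] using
    ⟨mem_interior_iff_mem_nhds.2 hμ, mem_interior_iff_mem_nhds.2 hν⟩

variable {ι : Type*} {l : Filter ι} {μ : ι → ProbabilityMeasure ℝ}

lemma mem_integrableExpSet_and_tendsto_mgf_of_tendsto [l.NeBot]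
    {ν : ProbabilityMeasure ℝ} {s C : ℝ} (hν : Tendsto μ l (𝓝 ν))
    (hμ : ∀ᶠ i in l, 2 * s ∈ integrableExpSet id (μ i) ∧ mgf id (μ i) (2 * s) ≤ C) :
    s ∈ integrableExpSet id ν ∧
      Tendsto (fun i => mgf id (μ i) s) l (𝓝 (mgf id ν s)) := by
  let f : C(ℝ, ℝ) := ⟨fun x => Real.exp (s * x), by fun_prop⟩
  have hsq (x : ℝ) : f x ^ 2 = Real.exp (2 * s * x) := by
    rw [ContinuousMap.coe_mk, ← Real.exp_nat_mul]; ring_nf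
  obtain ⟨hmem, hlim⟩ := memLp_two_and_tendsto_integral_of_integral_sq_le (f := f) (C := C) hν <|
    hμ.mono fun i hi => by
      rw [memLp_two_iff_integrable_sq f.continuous.aestronglyMeasurable]
      simpa only [hsq] using! hi
  exact ⟨hmem.integrable one_le_two, hlim⟩

lemma exists_isCompact_eventually_mem_of_tendsto_mgf {M : ℝ → ℝ}
    (hμ : ∀ᶠ t in 𝓝 (0 : ℝ), ∀ᶠ i in l, t ∈ integrableExpSet id (μ i))
    (h : ∀ᶠ t in 𝓝 (0 : ℝ), Tendsto (fun i => mgf id (μ i) t) l (𝓝 (M t))) :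
    ∃ K : Set (ProbabilityMeasure ℝ), IsCompact K ∧ ∀ᶠ i in l, μ i ∈ K := by
  have hneg : Tendsto Neg.neg (𝓝 (0 : ℝ)) (𝓝 0) := continuous_neg.tendsto' 0 0 neg_zero
  have hnhds := (hμ.and h).and (hneg.eventually (hμ.and h))
  obtain ⟨t, ⟨⟨hint, hlim⟩, hint_neg, hlim_neg⟩, ht⟩ :=
    ((hnhds.filter_mono nhdsWithin_le_nhds).and (self_mem_nhdsWithin (s := {0}ᶜ))).exists
  have htight : IsTightMeasureSet {ν : Measure ℝ | t ∈ integrableExpSet id ν ∧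
      -t ∈ integrableExpSet id ν ∧ mgf id ν t + mgf id ν (-t) ≤ M t + M (-t) + 1} :=
    isTightMeasureSet_of_mgf_add_mgf_neg_le ht fun _ => id
  refine ⟨closure {ν | (ν : Measure ℝ) ∈ _}, isCompact_closure_of_isTightMeasureSet
    (htight.subset (Set.image_preimage_subset _ _)), ?_⟩
  filter_upwards [hint, hint_neg, (hlim.add hlim_neg).eventually_le_const (lt_add_one _)]
    with i hi hi_neg hle using subset_closure ⟨hi, hi_neg, hle⟩

lemma eq_of_tendsto_of_tendsto_mgf [l.NeBot] {ν P : ProbabilityMeasure ℝ}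
    (hν : Tendsto μ l (𝓝 ν)) (hP : integrableExpSet id P ∈ 𝓝 0)
    (hμ : ∀ᶠ t in 𝓝 (0 : ℝ), ∀ᶠ i in l, t ∈ integrableExpSet id (μ i))
    (h : ∀ᶠ t in 𝓝 (0 : ℝ), Tendsto (fun i => mgf id (μ i) t) l (𝓝 (mgf id P t))) :
    ν = P := by
  have htwo : Tendsto (2 * ·) (𝓝 (0 : ℝ)) (𝓝 0) :=
    (continuous_const_mul 2).tendsto' 0 0 (mul_zero 2)
  have hlim : ∀ᶠ t in 𝓝 (0 : ℝ), t ∈ integrableExpSet id ν ∧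
      Tendsto (fun i => mgf id (μ i) t) l (𝓝 (mgf id ν t)) := by
    filter_upwards [htwo.eventually (hμ.and h)] with t ⟨hint, hlim⟩
    exact mem_integrableExpSet_and_tendsto_mgf_of_tendsto hν
      (hint.and (hlim.eventually_le_const (lt_add_one _)))
  have hmgf : mgf id ν =ᶠ[𝓝 0] mgf id P := by
    filter_upwards [hlim, h] with t ⟨_, hν⟩ hP using tendsto_nhds_unique hν hP
  exact ProbabilityMeasure.toMeasure_injective
    (measure_eq_of_mgf_eventuallyEq (hlim.mono fun _ ht => ht.1) hP hmgf)

theorem tendsto_of_tendsto_mgf {P : ProbabilityMeasure ℝ}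
    (hP : integrableExpSet id P ∈ 𝓝 0)
    (hμ : ∀ᶠ t in 𝓝 (0 : ℝ), ∀ᶠ i in l, t ∈ integrableExpSet id (μ i))
    (h : ∀ᶠ t in 𝓝 (0 : ℝ), Tendsto (fun i => mgf id (μ i) t) l (𝓝 (mgf id P t))) :
    Tendsto μ l (𝓝 P) := by
  obtain ⟨K, hK, hμK⟩ := exists_isCompact_eventually_mem_of_tendsto_mgf hμ h
  refine hK.tendsto_nhds_of_unique_mapClusterPt hμK fun ν _ hν => ?_
  obtain ⟨U, hUl, hUν⟩ := mapClusterPt_iff_ultrafilter.1 hν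
  exact eq_of_tendsto_of_tendsto_mgf hUν hP (hμ.mono fun _ ht => ht.filter_mono hUl)
    (h.mono fun _ ht => ht.mono_left hUl)

variable {Ω : Type*} [MeasurableSpace Ω]

theorem laplace_conv_implies_levyProkhorov_conv_in_probability_general
    {ℙ : Measure Ω} {P : ProbabilityMeasure ℝ} {Q : ι → Ω → ProbabilityMeasure ℝ}
    (hP : integrableExpSet id P ∈ 𝓝 0)
    (hQ : ∀ᶠ t in 𝓝 (0 : ℝ), ∀ i ω, t ∈ integrableExpSet id (Q i ω))
    (hconv : ∀ᶠ t in 𝓝 (0 : ℝ),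
      TendstoInMeasure ℙ (fun i ω => mgf id (Q i ω) t) l fun _ => mgf id P t) :
    TendstoInMeasure ℙ (fun i ω => LevyProkhorov.ofMeasure (Q i ω)) l
      fun _ => LevyProkhorov.ofMeasure P := by
  have hmgf : ∀ᶠ t in 𝓝 (0 : ℝ), Tendsto (Function.uncurry fun i ω => mgf id (Q i ω) t)
      (inMeasureFilter ℙ l) (𝓝 (mgf id P t)) :=
    hconv.mono fun t => tendsto_inMeasureFilter_nhds_iff.2
  have hweak : Tendsto (Function.uncurry Q) (inMeasureFilter ℙ l) (𝓝 P) :=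
    tendsto_of_tendsto_mgf hP (hQ.mono fun t ht => .of_forall fun p => ht p.1 p.2) hmgf
  have hlp : Tendsto (Function.uncurry fun i ω => LevyProkhorov.ofMeasure (Q i ω))
      (inMeasureFilter ℙ l) (𝓝 (LevyProkhorov.ofMeasure P)) :=
    (LevyProkhorov.continuous_ofMeasure_probabilityMeasure.tendsto P).comp hweak
  exact tendsto_inMeasureFilter_nhds_iff.1 hlp

end MGF

/-- Lemma A.2, first part: under the Laplace-transform convergence hypotheses of
Lemma A.1, the random probability measures `Q n` converge weakly to `P` in probability,
weak convergence being metrized by the Lévy–Prokhorov metric. -/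
theorem laplace_conv_implies_levyProkhorov_conv_in_probability
    {Ω : Type*} [MeasurableSpace Ω] (ℙ : Measure Ω) [IsProbabilityMeasure ℙ]
    (P : Measure ℝ) [IsProbabilityMeasure P]
    (hPint : ∀ t : ℝ, Integrable (fun x => Real.exp (t * x)) P)
    (L : ℝ → ℝ) (hL : ∀ t, L t = ∫ x, Real.exp (t * x) ∂P)
    (Q : ℕ → Ω → Measure ℝ) (hQprob : ∀ n ω, IsProbabilityMeasure (Q n ω))
    (hQmeas : ∀ (n : ℕ) (g : ℝ → ℝ), Measurable g → (∃ C, ∀ x, |g x| ≤ C) →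
      Measurable (fun ω => ∫ x, g x ∂(Q n ω)))
    (hQint : ∀ (t : ℝ) (n : ℕ) (ω : Ω), Integrable (fun x => Real.exp (t * x)) (Q n ω))
    (hQLmeas : ∀ (t : ℝ) (n : ℕ), Measurable (fun ω => ∫ x, Real.exp (t * x) ∂(Q n ω)))
    (hconv : ∀ t : ℝ, ∀ ε > (0 : ℝ),
      Tendsto (fun n => ℙ {ω | ε < |(∫ x, Real.exp (t * x) ∂(Q n ω)) - L t|})
        atTop (nhds 0)) :
    ∀ ε > (0 : ℝ),
      Tendsto (fun n => ℙ {ω | ε < levyProkhorovDist (Q n ω) P})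
        atTop (nhds 0) := by
  let P' : ProbabilityMeasure ℝ := ⟨P, inferInstance⟩
  let Q' (n : ℕ) (ω : Ω) : ProbabilityMeasure ℝ := ⟨Q n ω, hQprob n ω⟩
  have hlp : TendstoInMeasure ℙ (fun n ω => LevyProkhorov.ofMeasure (Q' n ω)) atTop
      fun _ => LevyProkhorov.ofMeasure P' :=
    laplace_conv_implies_levyProkhorov_conv_in_probability_general
      (univ_mem' hPint) (.of_forall hQint) <| .of_forall fun t =>
        tendstoInMeasure_iff_lt_dist.2 (by simpa only [hL] using! hconv t)
  exact tendstoInMeasure_iff_lt_dist.1 hlp
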